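/- Let M : ℝ → Matrix (Fin n) (Fin n) ℝ be RAP (entrywise) and suppose there is δ with 0 ≤ δ < 1 such that ‖M(t)‖ ≤ δ for all t ∈ ℝ (operator norm). Then for every t the matrix I + M(t) is invertible, (I + M(t))⁻¹ = Σ_{k=0}^{∞} (−M(t))^k, and the function t ↦ (I + M(t))⁻¹ is RAP. -/

import Mathlib

/-!
Inversion `a ↦ a⁻¹` is Lipschitz on any set of units whose inverses are uniformly bounded, because
`a⁻¹ - b⁻¹ = a⁻¹ * (b - a) * b⁻¹`. When `‖f t‖ ≤ δ < 1`, summing the Neumann series bounds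
`(1 + f t)⁻¹` uniformly in `t`. Remote almost periodicity survives composition with a map that is
uniformly continuous on the range, so it passes from `f` to `1 + f` and then to its inverse.
-/

open MeasureTheory Filter

noncomputable def opNorm {n : ℕ} (A : Matrix (Fin n) (Fin n) ℝ) : ℝ :=
  ‖LinearMap.toContinuousLinearMap (Matrix.toEuclideanLin A)‖

def RelativelyDense (S : Set ℝ) : Prop :=
  ∃ l > 0, ∀ a : ℝ, ∃ τ ∈ S, τ ∈ Set.Icc a (a + l)

/-- A matrix-valued function is RAP: bounded, uniformly continuous, and with
relatively dense sets of ε-remote-translation numbers (operator norm). -/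
def RAPMatrixOp {n : ℕ} (M : ℝ → Matrix (Fin n) (Fin n) ℝ) : Prop :=
  (∃ C, ∀ t, opNorm (M t) ≤ C) ∧ UniformContinuous M ∧
  ∀ ε > 0, RelativelyDense
    {τ | Filter.limsup (fun t => opNorm (M (t + τ) - M t)) (Filter.cocompact ℝ) < ε}

open Set Bornology

theorem RelativelyDense.mono {S T : Set ℝ} (hS : RelativelyDense S) (hST : S ⊆ T) :
    RelativelyDense T := by
  obtain ⟨l, hl, h⟩ := hS
  exact ⟨l, hl, fun a => (h a).imp fun _ hτ => ⟨hST hτ.1, hτ.2⟩⟩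

/-- Remotely almost periodic functions on the real line with values in a pseudometric space, the
notion which `RAPMatrixOp` specializes to matrices. Both ends `±∞` of the line are taken into
account by the filter `cocompact ℝ`. -/
structure RemotelyAlmostPeriodic {E : Type*} [PseudoMetricSpace E] (f : ℝ → E) : Prop where
  isBounded_range : IsBounded (range f)
  uniformContinuous : UniformContinuous f
  relativelyDense : ∀ ε > 0,
    RelativelyDense {τ | limsup (fun t => dist (f (t + τ)) (f t)) (cocompact ℝ) < ε}

namespace RemotelyAlmostPeriodic

theorem uniformContinuousOn_comp {E F : Type*} [PseudoMetricSpace E] [PseudoMetricSpace F]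
    {f : ℝ → E} {g : E → F} (hf : RemotelyAlmostPeriodic f)
    (hg : UniformContinuousOn g (range f)) (hgf : IsBounded (range (g ∘ f))) :
    RemotelyAlmostPeriodic (g ∘ f) where
  isBounded_range := hgf
  uniformContinuous := uniformContinuousOn_univ.1 <|
    hg.comp hf.uniformContinuous.uniformContinuousOn fun t _ => mem_range_self t
  relativelyDense ε hε := by
    obtain ⟨η, hη, hgη⟩ := Metric.uniformContinuousOn_iff.1 hg (ε / 2) (half_pos hε)
    refine (hf.relativelyDense η hη).mono fun τ hτ => ?_
    obtain ⟨C, hC⟩ := Metric.isBounded_range_iff.1 hf.isBounded_range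
    have hf_close : ∀ᶠ t in cocompact ℝ, dist (f (t + τ)) (f t) < η :=
      eventually_lt_of_limsup_lt hτ (isBoundedUnder_of ⟨C, fun t => hC (t + τ) t⟩)
    have hgf_close : ∀ᶠ t in cocompact ℝ, dist (g (f (t + τ))) (g (f t)) ≤ ε / 2 :=
      hf_close.mono fun t ht => (hgη _ (mem_range_self _) _ (mem_range_self _) ht).le
    have hgf_cobdd : IsCoboundedUnder (· ≤ ·) (cocompact ℝ)
        fun t => dist (g (f (t + τ))) (g (f t)) :=
      (isBoundedUnder_of ⟨0, fun _ => dist_nonneg⟩).isCoboundedUnder_le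
    exact (limsup_le_of_le hgf_cobdd hgf_close).trans_lt (half_lt_self hε)

theorem lipschitzWith_comp {E F : Type*} [PseudoMetricSpace E] [PseudoMetricSpace F]
    {f : ℝ → E} {g : E → F} {K : NNReal} (hf : RemotelyAlmostPeriodic f) (hg : LipschitzWith K g) :
    RemotelyAlmostPeriodic (g ∘ f) :=
  hf.uniformContinuousOn_comp hg.uniformContinuous.uniformContinuousOn <| by
    simpa only [range_comp] using hg.isBounded_image hf.isBounded_range

theorem const_add {E : Type*} [SeminormedAddCommGroup E] {f : ℝ → E}
    (hf : RemotelyAlmostPeriodic f) (c : E) : RemotelyAlmostPeriodic fun t => c + f t :=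
  hf.lipschitzWith_comp (isometry_add_left c).lipschitz

end RemotelyAlmostPeriodic

section NormedRing

open scoped Ring

theorem lipschitzOnWith_ringInverse {R : Type*} [SeminormedRing R] (C : NNReal) :
    LipschitzOnWith (C * C) Ring.inverse {a : R | IsUnit a ∧ ‖a⁻¹ʳ‖ ≤ C} := by
  refine LipschitzOnWith.of_dist_le_mul fun a ⟨ha, haC⟩ b ⟨hb, hbC⟩ => ?_
  calc dist a⁻¹ʳ b⁻¹ʳ = ‖a⁻¹ʳ * (b - a) * b⁻¹ʳ‖ := by
        rw [dist_eq_norm, Ring.inverse_sub_inverse (iff_of_true ha hb)]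
    _ ≤ ‖a⁻¹ʳ‖ * ‖b - a‖ * ‖b⁻¹ʳ‖ := norm_mul₃_le
    _ ≤ C * ‖b - a‖ * C := by gcongr
    _ = ↑(C * C) * dist a b := by rw [dist_comm, dist_eq_norm, NNReal.coe_mul]; ring

theorem RemotelyAlmostPeriodic.ringInverse {R : Type*} [SeminormedRing R] {f : ℝ → R}
    (hf : RemotelyAlmostPeriodic f) (hunit : ∀ t, IsUnit (f t))
    (hbdd : IsBounded (range fun t => (f t)⁻¹ʳ)) :
    RemotelyAlmostPeriodic fun t => (f t)⁻¹ʳ := by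
  obtain ⟨C, hC, hfC⟩ := hbdd.exists_pos_norm_le
  lift C to NNReal using hC.le
  have hrange : range f ⊆ {a | IsUnit a ∧ ‖a⁻¹ʳ‖ ≤ C} :=
    range_subset_iff.2 fun t => ⟨hunit t, hfC _ (mem_range_self t)⟩
  exact hf.uniformContinuousOn_comp
    ((lipschitzOnWith_ringInverse C).mono hrange).uniformContinuousOn hbdd

variable {R : Type*} [NormedRing R] [HasSummableGeomSeries R]

theorem isUnit_one_add_of_norm_lt_one {x : R} (hx : ‖x‖ < 1) : IsUnit (1 + x) := by
  simpa only [sub_neg_eq_add] using isUnit_one_sub_of_norm_lt_one ((norm_neg x).trans_lt hx)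

theorem hasSum_neg_pow_ringInverse_one_add {x : R} (hx : ‖x‖ < 1) :
    HasSum (fun k : ℕ => (-x) ^ k) (1 + x)⁻¹ʳ := by
  simpa only [sub_neg_eq_add] using hasSum_geom_series_inverse (-x) ((norm_neg x).trans_lt hx)

theorem norm_ringInverse_one_add_le {x : R} (hx : ‖x‖ < 1) :
    ‖(1 + x)⁻¹ʳ‖ ≤ ‖(1 : R)‖ - 1 + (1 - ‖x‖)⁻¹ := by
  simpa only [(hasSum_neg_pow_ringInverse_one_add hx).tsum_eq, norm_neg] using
    tsum_geometric_le_of_norm_lt_one (-x) ((norm_neg x).trans_lt hx)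

theorem neumann_series_RAP_general {f : ℝ → R} (hf : RemotelyAlmostPeriodic f) {δ : ℝ}
    (hδ : δ < 1) (hbd : ∀ t, ‖f t‖ ≤ δ) :
    (∀ t, IsUnit (1 + f t)) ∧
    (∀ t, HasSum (fun k : ℕ => (-f t) ^ k) (1 + f t)⁻¹ʳ) ∧
    RemotelyAlmostPeriodic fun t => (1 + f t)⁻¹ʳ := by
  have hlt : ∀ t, ‖f t‖ < 1 := fun t => (hbd t).trans_lt hδ
  have hunit : ∀ t, IsUnit (1 + f t) := fun t => isUnit_one_add_of_norm_lt_one (hlt t)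
  have hinv_le : ∀ t, ‖(1 + f t)⁻¹ʳ‖ ≤ ‖(1 : R)‖ - 1 + (1 - δ)⁻¹ := fun t =>
    (norm_ringInverse_one_add_le (hlt t)).trans <| by
      gcongr
      exact hbd t
  refine ⟨hunit, fun t => hasSum_neg_pow_ringInverse_one_add (hlt t), ?_⟩
  exact (hf.const_add 1).ringInverse hunit
    (isBounded_iff_forall_norm_le.2 ⟨_, forall_mem_range.2 hinv_le⟩)

end NormedRing

section Matrix

open scoped Matrix.Norms.L2Operator

variable {n : ℕ}

theorem opNorm_eq_l2_opNorm (A : Matrix (Fin n) (Fin n) ℝ) : opNorm A = ‖A‖ :=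
  (Matrix.l2_opNorm_def A).symm

theorem rapMatrixOp_iff_remotelyAlmostPeriodic {M : ℝ → Matrix (Fin n) (Fin n) ℝ} :
    RAPMatrixOp M ↔ RemotelyAlmostPeriodic M := by
  have hbdd : (∃ C, ∀ t, opNorm (M t) ≤ C) ↔ IsBounded (range M) := by
    simp only [opNorm_eq_l2_opNorm, isBounded_iff_forall_norm_le, forall_mem_range]
  rw [RAPMatrixOp, hbdd]
  simp only [opNorm_eq_l2_opNorm, ← dist_eq_norm]
  exact ⟨fun ⟨hb, hu, hd⟩ => ⟨hb, hu, hd⟩, fun ⟨hb, hu, hd⟩ => ⟨hb, hu, hd⟩⟩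

end Matrix

/-- Neumann series — if `M` is RAP with `‖M(t)‖ ≤ δ < 1`, then
`I + M(t)` is invertible, `(I + M(t))⁻¹ = Σ (−M(t))^k`, and `t ↦ (I + M(t))⁻¹`
is RAP. -/
theorem neumann_series_RAP {n : ℕ} (M : ℝ → Matrix (Fin n) (Fin n) ℝ)
    (hRAP : RAPMatrixOp M) (δ : ℝ) (hδ0 : 0 ≤ δ) (hδ1 : δ < 1)
    (hbd : ∀ t, opNorm (M t) ≤ δ) :
    (∀ t, IsUnit (1 + M t)) ∧
    (∀ t, (1 + M t)⁻¹ = ∑' k : ℕ, (-M t) ^ k) ∧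
    RAPMatrixOp (fun t => (1 + M t)⁻¹) := by
  open scoped Matrix.Norms.L2Operator in
  simp only [Matrix.nonsing_inv_eq_ringInverse, rapMatrixOp_iff_remotelyAlmostPeriodic,
    opNorm_eq_l2_opNorm] at hRAP hbd ⊢
  obtain ⟨hunit, hsum, hinv⟩ := neumann_series_RAP_general hRAP hδ1 hbd
  exact ⟨hunit, fun t => (hsum t).tsum_eq.symm, hinv⟩
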